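/- Let N=(P,T,W,M₀) be a Petri net with weighted comparable presets (WPI) solving a finite, reachable, deterministic LTS TS=(S,T,→,s₀), and let a,b∈T be labels with a▷b and a⊲⊳b. Then W(·,b)⪇W(·,a), i.e., W(p,b)≤W(p,a) for all places p and W(·,b)≠W(·,a); in particular the preset of b is properly contained in that of a. -/

import Mathlib

section Defs

variable {S L P T : Type*}

/-- `enab tr s a` means the label `a` is enabled at state `s`, i.e. `s[a⟩`. -/
def enab (tr : S → L → S → Prop) (s : S) (a : L) : Prop := ∃ s', tr s a s'

/-- The LTS is deterministic. -/
def Deterministic (tr : S → L → S → Prop) : Prop :=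
  ∀ s a s' s'', tr s a s' → tr s a s'' → s' = s''

/-- `Walk tr s σ s'` : a walk from `s` to `s'` labelled by the word `σ`. -/
inductive Walk (tr : S → L → S → Prop) : S → List L → S → Prop
  | nil (s : S) : Walk tr s [] s
  | cons {s s' s'' : S} {a : L} {σ : List L} :
      tr s a s' → Walk tr s' σ s'' → Walk tr s (a :: σ) s''

/-- `s` is reachable from `s₀`. -/
def ReachableState (tr : S → L → S → Prop) (s₀ s : S) : Prop := ∃ σ, Walk tr s₀ σ s

/-- Every state is reachable from the initial state `s₀`. -/
def ReachableLTS (tr : S → L → S → Prop) (s₀ : S) : Prop := ∀ s, ReachableState tr s₀ s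

/-- `a ≡ b` : `a` and `b` are enabled at exactly the same states. -/
def lequiv (tr : S → L → S → Prop) (a b : L) : Prop := ∀ s, enab tr s a ↔ enab tr s b

/-- `a ▷ b` : wherever `a` is enabled so is `b`, and somewhere `b` is enabled but not `a`. -/
def limpl (tr : S → L → S → Prop) (a b : L) : Prop :=
  (∀ s, enab tr s a → enab tr s b) ∧ ∃ s, enab tr s b ∧ ¬ enab tr s a

/-- `a ⋈ b` : `a ▷ b` or `b ▷ a`. -/
def lbowtie (tr : S → L → S → Prop) (a b : L) : Prop := limpl tr a b ∨ limpl tr b a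

/-- `a ∥ b` : somewhere `a` but not `b` is enabled, and somewhere `b` but not `a`. -/
def linter (tr : S → L → S → Prop) (a b : L) : Prop :=
  (∃ s, enab tr s a ∧ ¬ enab tr s b) ∧ (∃ s, enab tr s b ∧ ¬ enab tr s a)

/-- Deactivation relation `a ⊲⊳ b`: one of the labels can deactivate the other. -/
def ldeact (tr : S → L → S → Prop) (a b : L) : Prop :=
  ∃ s s', (enab tr s a ∧ tr s b s' ∧ ¬ enab tr s' a) ∨
          (enab tr s b ∧ tr s a s' ∧ ¬ enab tr s' b)

/-- A Petri net over places `P` and transitions `T`: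
`Wpt p t = W(p,t)`, `Wtp t p = W(t,p)`, `M0` the initial marking. -/
structure PetriNet (P T : Type*) where
  Wpt : P → T → ℕ
  Wtp : T → P → ℕ
  M0 : P → ℕ

/-- A marking `M` enables a transition `t`. -/
def PetriNet.enables (N : PetriNet P T) (M : P → ℕ) (t : T) : Prop :=
  ∀ p, N.Wpt p t ≤ M p

/-- The marking resulting from firing `t` at `M`. -/
def PetriNet.fire (N : PetriNet P T) (M : P → ℕ) (t : T) : P → ℕ :=
  fun p => M p - N.Wpt p t + N.Wtp t p

/-- One firing step between markings. -/
def PetriNet.step (N : PetriNet P T) (M M' : P → ℕ) : Prop :=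
  ∃ t, N.enables M t ∧ M' = N.fire M t

/-- The marking `M` is reachable from the initial marking. -/
def PetriNet.reach (N : PetriNet P T) (M : P → ℕ) : Prop :=
  Relation.ReflTransGen N.step N.M0 M

/-- `N` solves the LTS given by `tr` and initial state `s₀`: there is a bijection `ζ`
from the states onto the reachable markings with `ζ s₀ = M₀` preserving edges both ways. -/
def Solves (N : PetriNet P T) (tr : S → T → S → Prop) (s₀ : S) : Prop :=
  ∃ ζ : S → (P → ℕ),
    Function.Injective ζ ∧
    (∀ M, N.reach M ↔ ∃ s, ζ s = M) ∧
    ζ s₀ = N.M0 ∧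
    ∀ s s' t, tr s t s' ↔ (N.enables (ζ s) t ∧ N.fire (ζ s) t = ζ s')

/-- The preset `•t` of a transition. -/
def PetriNet.preset (N : PetriNet P T) (t : T) : Set P := {p | 0 < N.Wpt p t}

/-- The postset `p^•` of a place. -/
def PetriNet.postset (N : PetriNet P T) (p : P) : Set T := {t | 0 < N.Wpt p t}

/-- `•T'` for a set of transitions `T'`. -/
def PetriNet.presetSet (N : PetriNet P T) (T' : Set T) : Set P :=
  {p | ∃ t ∈ T', 0 < N.Wpt p t}

/-- All arc weights are at most 1. -/
def PetriNet.plain (N : PetriNet P T) : Prop :=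
  ∀ p t, N.Wpt p t ≤ 1 ∧ N.Wtp t p ≤ 1

/-- Weighted comparable presets: transitions with intersecting presets have comparable presets. -/
def PetriNet.WPI (N : PetriNet P T) : Prop :=
  ∀ t t', (N.preset t ∩ N.preset t').Nonempty →
    (∀ p, N.Wpt p t ≤ N.Wpt p t') ∨ (∀ p, N.Wpt p t' ≤ N.Wpt p t)

/-- Weighted asymmetric choice. -/
def PetriNet.WAC (N : PetriNet P T) : Prop :=
  ∀ p p', (N.postset p ∩ N.postset p').Nonempty →
    (∀ t, N.Wpt p t ≤ N.Wpt p' t) ∨ (∀ t, N.Wpt p' t ≤ N.Wpt p t)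

/-- Equal conflict. -/
def PetriNet.EC (N : PetriNet P T) : Prop :=
  ∀ t t', (N.preset t ∩ N.preset t').Nonempty → ∀ p, N.Wpt p t = N.Wpt p t'

/-- Asymmetric choice: weighted asymmetric choice and plain. -/
def PetriNet.AC (N : PetriNet P T) : Prop := N.plain ∧ N.WAC

/-- Block-reduced asymmetric choice. -/
def PetriNet.BRAC (N : PetriNet P T) : Prop :=
  N.plain ∧ ∀ p p', (N.postset p ∩ N.postset p').Nonempty →
    N.postset p = N.postset p' ∨
    ∃ T1 T2 : Set T,
      (N.postset p = T1 ∧ N.postset p' = T1 ∪ T2 ∧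
        N.presetSet T1 = {p, p'} ∧ N.presetSet T2 = {p'}) ∨
      (N.postset p' = T1 ∧ N.postset p = T1 ∪ T2 ∧
        N.presetSet T1 = {p, p'} ∧ N.presetSet T2 = {p})

/-- Reduced asymmetric choice. -/
def PetriNet.RAC (N : PetriNet P T) : Prop :=
  N.plain ∧ ∀ p p', p ≠ p' → (N.postset p ∩ N.postset p').Nonempty →
    ((N.postset p).ncard = 1 ∧ (N.postset p').ncard ≤ 2 ∧
      N.presetSet (N.postset p') = {p, p'}) ∨
    ((N.postset p').ncard = 1 ∧ (N.postset p).ncard ≤ 2 ∧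
      N.presetSet (N.postset p) = {p, p'})

/-- A region `(R,B,F)` of the LTS given by `tr`. -/
def IsRegion (tr : S → L → S → Prop) (R : S → ℕ) (B F : L → ℕ) : Prop :=
  ∀ s a s', tr s a s' → B a ≤ R s ∧ R s' = R s - B a + F a

end Defs

/-! If firing `y` disables an enabled transition `x`, then `y` consumes tokens from some place in
the preset of `x`, so two labels in the deactivation relation have intersecting presets. WPI then
makes their input weights comparable, and a marking enabling `b` but not `a` excludes
`W(·,a) ≤ W(·,b)`. -/

namespace PetriNet

variable {P T : Type*} {N : PetriNet P T} {M : P → ℕ} {x y : T}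

theorem reach.fire (hM : N.reach M) (hx : N.enables M x) : N.reach (N.fire M x) :=
  hM.tail ⟨x, hx, rfl⟩

theorem enables_of_wpt_le (hxy : (N.Wpt · x) ≤ (N.Wpt · y)) (hy : N.enables M y) :
    N.enables M x :=
  hxy.trans hy

theorem preset_inter_nonempty_of_not_enables_fire (hx : N.enables M x)
    (hx' : ¬ N.enables (N.fire M y) x) : (N.preset x ∩ N.preset y).Nonempty := by
  obtain ⟨p, hp⟩ := not_forall.1 hx'
  have hlt : M p - N.Wpt p y + N.Wtp y p < N.Wpt p x := not_le.1 hp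
  have hle : N.Wpt p x ≤ M p := hx p
  have hx_pos : 0 < N.Wpt p x := by lia
  have hy_pos : 0 < N.Wpt p y := by lia
  exact ⟨p, hx_pos, hy_pos⟩

theorem WPI.wpt_lt (hN : N.WPI) (hxy : (N.preset x ∩ N.preset y).Nonempty)
    (hx : N.enables M x) (hy : ¬ N.enables M y) : (N.Wpt · x) < (N.Wpt · y) := by
  have weight_not_le : ¬ (N.Wpt · y) ≤ (N.Wpt · x) := fun hle => hy (enables_of_wpt_le hle hx)
  exact lt_of_le_not_ge ((hN x y hxy).resolve_right weight_not_le) weight_not_le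

end PetriNet

namespace Solves

variable {S P T : Type*} {N : PetriNet P T} {tr : S → T → S → Prop} {s₀ : S}

theorem exists_marking (hN : Solves N tr s₀) :
    ∃ ζ : S → P → ℕ, (∀ s t, enab tr s t ↔ N.enables (ζ s) t) ∧
      ∀ s t s', tr s t s' → ζ s' = N.fire (ζ s) t := by
  obtain ⟨ζ, -, reach_iff, -, tr_iff⟩ := hN
  refine ⟨ζ, fun s t => ⟨fun ⟨s', h⟩ => ((tr_iff s s' t).1 h).1, fun ht => ?_⟩,
    fun s t s' h => ((tr_iff s s' t).1 h).2.symm⟩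
  have hfire : N.reach (N.fire (ζ s) t) := ((reach_iff _).2 ⟨s, rfl⟩).fire ht
  obtain ⟨s', hs'⟩ := (reach_iff _).1 hfire
  exact ⟨s', (tr_iff s s' t).2 ⟨ht, hs'.symm⟩⟩

theorem preset_inter_nonempty_of_disables (hN : Solves N tr s₀) {s s' : S} {x y : T}
    (hx : enab tr s x) (hy : tr s y s') (hx' : ¬ enab tr s' x) :
    (N.preset x ∩ N.preset y).Nonempty := by
  obtain ⟨ζ, enab_iff, fire_eq⟩ := hN.exists_marking
  rw [enab_iff] at hx hx'
  rw [fire_eq s y s' hy] at hx'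
  exact PetriNet.preset_inter_nonempty_of_not_enables_fire hx hx'

theorem preset_inter_nonempty_of_ldeact (hN : Solves N tr s₀) {x y : T}
    (hxy : ldeact tr x y) : (N.preset x ∩ N.preset y).Nonempty := by
  obtain ⟨s, s', ⟨hx, hy, hx'⟩ | ⟨hy, hx, hy'⟩⟩ := hxy
  · exact hN.preset_inter_nonempty_of_disables hx hy hx'
  · exact Set.inter_comm _ _ ▸ hN.preset_inter_nonempty_of_disables hy hx hy'

end Solves

theorem bowtie_deact_proper_containment_general
    {S P T : Type*} {tr : S → T → S → Prop} {s₀ : S} {N : PetriNet P T}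
    (hwpi : N.WPI) (hsol : Solves N tr s₀) {a b : T}
    (hba : ∃ s, enab tr s b ∧ ¬ enab tr s a) (hd : ldeact tr a b) :
    (∀ p, N.Wpt p b ≤ N.Wpt p a) ∧ (∃ p, N.Wpt p b ≠ N.Wpt p a) := by
  obtain ⟨ζ, enab_iff, -⟩ := hsol.exists_marking
  obtain ⟨s, hb, ha⟩ := hba
  rw [enab_iff] at hb ha
  have shared : (N.preset b ∩ N.preset a).Nonempty :=
    Set.inter_comm _ _ ▸ hsol.preset_inter_nonempty_of_ldeact hd
  have hlt : (N.Wpt · b) < (N.Wpt · a) := hwpi.wpt_lt shared hb ha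
  exact ⟨hlt.le, Function.ne_iff.1 hlt.ne⟩

/-- Case 5: If a WPI Petri net `N` solves a finite, reachable,
deterministic LTS and `a ▷ b` and `a ⊲⊳ b`, then `W(·,b) ⪇ W(·,a)`, i.e. the
preset of `b` is properly contained (with arc weights) in that of `a`. -/
theorem bowtie_deact_proper_containment
    {S P T : Type*} [Fintype S] [Fintype P] [Fintype T]
    (tr : S → T → S → Prop) (s₀ : S)
    (hdet : Deterministic tr) (hreach : ReachableLTS tr s₀)
    (N : PetriNet P T) (hwpi : N.WPI) (hsol : Solves N tr s₀)
    (a b : T) (himp : limpl tr a b) (hd : ldeact tr a b) :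
    (∀ p, N.Wpt p b ≤ N.Wpt p a) ∧ (∃ p, N.Wpt p b ≠ N.Wpt p a) :=
  bowtie_deact_proper_containment_general hwpi hsol himp.2 hd
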